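/- Let κ ≥ 2 and A ≥ q be integers and let a = (a_n)_{n≥1} be a sequence over F_q[T] with q ≤ |a_n| ≤ A for all n ≥ 1. Assume there exists an integer n_0 ≥ 1 such that p(a, n) ≤ κn for all n ≥ n_0, and that the Diophantine exponent Dio(a) is finite. Set ξ := [0, a_1, a_2, …] ∈ F_q((T^{-1})) and let (p_n/q_n) be its convergents. Then w_2(ξ) ≤ 128(2κ+1)^3 · Dio(a) · (log A / log q)^4. Moreover, if the sequence (|q_n|^{1/n})_{n≥1} converges, then w_2(ξ) ≤ 64(2κ+1)^3 · Dio(a). -/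

import Mathlib

open Polynomial Filter
open scoped ENNReal

noncomputable section

namespace Ooto

variable (Fq : Type) [Field Fq] [Fintype Fq]

/-- `F_q((T⁻¹))`, realized as formal Laurent series in the variable `X = T⁻¹`. -/
abbrev K := LaurentSeries Fq

/-- The element `T = X⁻¹` of `F_q((T⁻¹))`. -/
def TT : K Fq := HahnSeries.single (-1 : ℤ) (1 : Fq)

/-- The natural embedding of `F_q[T]` into `F_q((T⁻¹))`, sending `T` to `T`. -/
def polyToK : Polynomial Fq →+* K Fq := Polynomial.eval₂RingHom HahnSeries.C (TT Fq)

open Classical in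
/-- The absolute value on `F_q((T⁻¹))`: `|0| = 0` and `|ξ| = q^{-N}` where `N` is the order
of `ξ` as a series in `T⁻¹`. -/
def kabs (f : K Fq) : ℝ := if f = 0 then 0 else (Fintype.card Fq : ℝ) ^ (-f.order)

/-- A fixed algebraic closure of `F_q((T⁻¹))`. -/
abbrev L := AlgebraicClosure (K Fq)

def toL : K Fq →+* L Fq := algebraMap (K Fq) (L Fq)

def φ : Polynomial Fq →+* L Fq := (toL Fq).comp (polyToK Fq)

/-- Evaluation of `P ∈ (F_q[T])[X]` at `ξ ∈ F_q((T⁻¹))`. -/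
def evalK (P : Polynomial (Polynomial Fq)) (ξ : K Fq) : K Fq :=
  Polynomial.eval₂ (polyToK Fq) ξ P

/-- Evaluation of `P ∈ (F_q[T])[X]` at a point of the algebraic closure. -/
def evalL (P : Polynomial (Polynomial Fq)) (α : L Fq) : L Fq :=
  Polynomial.eval₂ (φ Fq) α P

/-- Height of a polynomial over `F_q[T]`: the maximum of the absolute values of its
coefficients. -/
def Hpoly (P : Polynomial (Polynomial Fq)) : ℝ := ⨆ i : ℕ, kabs Fq (polyToK Fq (P.coeff i))

/-- `P` is the minimal polynomial of `α`: a non-constant irreducible primitive polynomial in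
`(F_q[T])[X]` whose leading coefficient is monic in `T`, vanishing at `α`. -/
def IsMinPolyOf (P : Polynomial (Polynomial Fq)) (α : L Fq) : Prop :=
  0 < P.natDegree ∧ Irreducible P ∧ P.IsPrimitive ∧ (P.leadingCoeff).Monic ∧ evalL Fq P α = 0

/-- `α` is algebraic over `F_q(T)`. -/
def IsAlgElem (α : L Fq) : Prop := ∃ P, IsMinPolyOf Fq P α

open Classical in
/-- The minimal polynomial of an algebraic element (junk value `0` otherwise). -/
def minPolyPrim (α : L Fq) : Polynomial (Polynomial Fq) :=
  if h : IsAlgElem Fq α then h.choose else 0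

/-- Degree of an algebraic element. -/
def degAlg (α : L Fq) : ℕ := (minPolyPrim Fq α).natDegree

/-- Height of an algebraic element. -/
def heightAlg (α : L Fq) : ℝ := Hpoly Fq (minPolyPrim Fq α)

/-- Inseparable degree of a polynomial `P ∈ (F_q[T])[X]`: the largest power `f = p^j` of the
characteristic such that `P(X) = R(X^f)` for some `R`. -/
def insepDeg (P : Polynomial (Polynomial Fq)) : ℕ :=
  (ringChar Fq) ^ sSup {j : ℕ | ∃ R : Polynomial (Polynomial Fq),
    P = R.comp (Polynomial.X ^ (ringChar Fq) ^ j)}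

/-- Inseparable degree of an algebraic element. -/
def insepAlg (α : L Fq) : ℕ := insepDeg Fq (minPolyPrim Fq α)

/-- `α'` is the Galois conjugate of the quadratic element `α` (equal to `α` itself in the
inseparable case): the minimal polynomial of `α` factors as `A(X - α)(X - α')`. -/
def IsConjOf (α' α : L Fq) : Prop :=
  (minPolyPrim Fq α).natDegree = 2 ∧
  (minPolyPrim Fq α).map (φ Fq) =
    Polynomial.C (φ Fq (minPolyPrim Fq α).leadingCoeff) *
      (Polynomial.X - Polynomial.C α) * (Polynomial.X - Polynomial.C α')

/-- `v` is an absolute value on the algebraic closure of `F_q((T⁻¹))` extending `kabs`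
(such an extension exists and is unique). -/
structure IsAbsExt (v : L Fq → ℝ) : Prop where
  eq_zero_iff : ∀ x, v x = 0 ↔ x = 0
  map_mul : ∀ x y, v (x * y) = v x * v y
  add_le : ∀ x y, v (x + y) ≤ max (v x) (v y)
  nonneg : ∀ x, 0 ≤ v x
  extends_kabs : ∀ f : K Fq, v (toL Fq f) = kabs Fq f

/-- The exponent `w_n(ξ)`: the supremum of the real numbers `w` such that
`0 < |P(ξ)| ≤ H(P)^{-w}` for infinitely many `P ∈ (F_q[T])[X]` of degree at most `n`. -/
def wExp (n : ℕ) (ξ : K Fq) : EReal :=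
  sSup {x : EReal | ∃ w : ℝ, x = (w : EReal) ∧
    {P : Polynomial (Polynomial Fq) | P.natDegree ≤ n ∧ 0 < kabs Fq (evalK Fq P ξ) ∧
      kabs Fq (evalK Fq P ξ) ≤ Hpoly Fq P ^ (-w)}.Infinite}

/-- The exponent `w_n^*(ξ)`: the supremum of the real numbers `w` such that
`0 < |ξ - α| ≤ H(α)^{-w-1}` for infinitely many algebraic `α` of degree at most `n`. -/
def wStarExp (v : L Fq → ℝ) (n : ℕ) (ξ : K Fq) : EReal :=
  sSup {x : EReal | ∃ w : ℝ, x = (w : EReal) ∧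
    {α : L Fq | IsAlgElem Fq α ∧ degAlg Fq α ≤ n ∧ 0 < v (toL Fq ξ - α) ∧
      v (toL Fq ξ - α) ≤ heightAlg Fq α ^ (-w - 1)}.Infinite}

/-- `pSeq a n = p_{n-1}`, the numerators of the convergents of `[a 0; a 1, a 2, …]`
(with `p_{-1} = 1`). -/
def pSeq (a : ℕ → Polynomial Fq) : ℕ → Polynomial Fq
  | 0 => 1
  | 1 => a 0
  | (n+2) => a (n+1) * pSeq a (n+1) + pSeq a n

/-- `qSeq a n = q_{n-1}`, the denominators of the convergents of `[a 0; a 1, a 2, …]`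
(with `q_{-1} = 0`). -/
def qSeq (a : ℕ → Polynomial Fq) : ℕ → Polynomial Fq
  | 0 => 0
  | 1 => 1
  | (n+2) => a (n+1) * qSeq a (n+1) + qSeq a n

/-- `ξ` has continued fraction expansion `[a 0; a 1, a 2, …]`: each partial quotient `a n`
(`n ≥ 1`) has degree at least one and `|ξ - p_n/q_n| = |q_n|⁻¹|q_{n+1}|⁻¹` for all `n ≥ 0`. -/
def IsCFOf (ξ : K Fq) (a : ℕ → Polynomial Fq) : Prop :=
  (∀ n, 1 ≤ n → 1 ≤ (a n).natDegree) ∧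
  ∀ n : ℕ,
    kabs Fq (ξ - polyToK Fq (pSeq Fq a (n+1)) / polyToK Fq (qSeq Fq a (n+1))) =
      (kabs Fq (polyToK Fq (qSeq Fq a (n+1))) * kabs Fq (polyToK Fq (qSeq Fq a (n+2))))⁻¹

/-- The sequence of partial quotients of `[0; b 0, b 1, b 2, …]`. -/
def cfA (b : ℕ → Polynomial Fq) : ℕ → Polynomial Fq := fun n => if n = 0 then 0 else b (n - 1)

/-- `qden b n` is the denominator `q_n` of the `n`-th convergent of `[0; b 0, b 1, …]`. -/
def qden (b : ℕ → Polynomial Fq) (n : ℕ) : Polynomial Fq := qSeq Fq (cfA Fq b) (n + 1)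

/-- `V^w` for a finite word `V` and a real `w ≥ 0`: `⌊w⌋` copies of `V` followed by the prefix
of `V` of length `⌈(w - ⌊w⌋)|V|⌉`. -/
def wordPow {A : Type*} (V : List A) (w : ℝ) : List A :=
  (List.replicate ⌊w⌋₊ V).flatten ++ V.take ⌈(w - ⌊w⌋₊) * V.length⌉₊

/-- The finite word `l` is a prefix of the infinite word `b`. -/
def IsPrefixOfSeq {A : Type*} (l : List A) (b : ℕ → A) : Prop :=
  ∀ (i : ℕ) (h : i < l.length), l.get ⟨i, h⟩ = b i

/-- Condition `(*)_ρ` for an infinite word. -/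
def SatisfiesCond {A : Type*} (b : ℕ → A) (ρ : ℝ) : Prop :=
  ∃ (U V : ℕ → List A) (w : ℕ → ℝ),
    (∀ n, V n ≠ []) ∧ (∀ n, 0 ≤ w n) ∧
    (∀ n, IsPrefixOfSeq (U n ++ wordPow (V n) (w n)) b) ∧
    (∀ n, ρ * (((U n).length + (V n).length : ℕ) : ℝ) ≤
      (((U n).length + (wordPow (V n) (w n)).length : ℕ) : ℝ)) ∧
    StrictMono fun n => (wordPow (V n) (w n)).length

/-- The Diophantine exponent of an infinite word: the supremum of the `ρ` such that the word
satisfies Condition `(*)_ρ`. -/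
def dioExp {A : Type*} (b : ℕ → A) : EReal :=
  sSup {x : EReal | ∃ ρ : ℝ, x = (ρ : EReal) ∧ SatisfiesCond b ρ}

/-- The complexity function: the number of distinct blocks of `n` consecutive letters. -/
def complexity {A : Type*} (b : ℕ → A) (n : ℕ) : ℕ∞ :=
  {w : Fin n → A | ∃ i : ℕ, ∀ k : Fin n, w k = b (i + k)}.encard

/-- The infinite word `b` is ultimately periodic. -/
def UltimatelyPeriodic {A : Type*} (b : ℕ → A) : Prop :=
  ∃ N T : ℕ, 0 < T ∧ ∀ n, N ≤ n → b (n + T) = b n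

/-!
Suppose that the blocks of length `l` of the word at the positions `i < j` coincide. If the
complete quotients of `ξ` at `i` and `j` were equal, `ξ` would be a zero of a polynomial `Q` of
degree 2 whose height is bounded by `|q_i| |q_j|`; as it is, `|Q(ξ)|` is about
`(|q_{i+l}| |q_{j+l}|)⁻¹`, provided that `l` is maximal. Given `P` of degree at most 2, eliminate
the square between `P` and `Q` to obtain a linear polynomial `R`. If `R(ξ) ≠ 0`, the convergents
of `ξ` bound `|R(ξ)|` from below, and `Q(ξ)` is too small to account for it, so `P(ξ)` is not
small. If `R(ξ) = 0`, then `P(ξ)` is `Q(ξ)` times the ratio of the coefficients of `X ^ 2`, hence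
`|P(ξ)| ≥ |Q(ξ)| / (|q_i| |q_j|)`. In both cases `|P(ξ)|` is at least
`(|q_i| |q_j| |q_{i+l+1}| |q_{j+l+1}|)⁻¹`.

The bound on the complexity yields a coincidence with `j ≤ κ n` and `l ≥ n`, where `n` is
proportional to the logarithm of the height of `P`, and the Diophantine exponent bounds
`(j + l) / j`. The linear growth of `log |q_n|` converts these positions into exponents.
-/

section Height

variable {R : Type*} [CommRing R] {P Q : R[X][X]} {d e : ℕ}

/-- Every coefficient of `P` has degree at most `e`; over `F_q[T]` this says that the height
of `P` is at most `q ^ e`. -/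
def CoeffNatDegreeLE (P : R[X][X]) (e : ℕ) : Prop := ∀ k, (P.coeff k).natDegree ≤ e

namespace CoeffNatDegreeLE

lemma mono (hP : CoeffNatDegreeLE P d) (h : d ≤ e) : CoeffNatDegreeLE P e :=
  fun k => (hP k).trans h

protected lemma C {p : R[X]} (hp : p.natDegree ≤ e) : CoeffNatDegreeLE (C p) e := fun k => by
  rw [coeff_C]
  split_ifs
  · exact hp
  · simp

protected lemma add (hP : CoeffNatDegreeLE P e) (hQ : CoeffNatDegreeLE Q e) :
    CoeffNatDegreeLE (P + Q) e := fun k => by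
  rw [coeff_add]
  exact natDegree_add_le_of_degree_le (hP k) (hQ k)

protected lemma sub (hP : CoeffNatDegreeLE P e) (hQ : CoeffNatDegreeLE Q e) :
    CoeffNatDegreeLE (P - Q) e := fun k => by
  rw [coeff_sub]
  exact natDegree_sub_le_of_le (hP k) (hQ k) |>.trans (max_self e).le

protected lemma mul (hP : CoeffNatDegreeLE P d) (hQ : CoeffNatDegreeLE Q e) :
    CoeffNatDegreeLE (P * Q) (d + e) := fun k => by
  rw [coeff_mul]
  exact natDegree_sum_le_of_forall_le _ _ fun x _ => natDegree_mul_le_of_le (hP x.1) (hQ x.2)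

end CoeffNatDegreeLE

lemma finite_setOf_natDegree_le_forall_coeff_mem (d : ℕ) {S : Set R} (hS : S.Finite) :
    {p : R[X] | p.natDegree ≤ d ∧ ∀ k, p.coeff k ∈ S}.Finite :=
  .of_injOn (f := fun p (k : Fin (d + 1)) => p.coeff k) (t := {f : Fin (d + 1) → R | ∀ k, f k ∈ S})
    (fun _ hp k => hp.2 k)
    (fun _ hp _ hq hpq => (ext_iff_natDegree_le hp.1 hq.1).2 fun k hk =>
      congrFun hpq ⟨k, Nat.lt_succ_of_le hk⟩)
    (.pi' fun _ => hS)

lemma finite_setOf_coeffNatDegreeLE [Finite R] (d e : ℕ) :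
    {P : R[X][X] | P.natDegree ≤ d ∧ CoeffNatDegreeLE P e}.Finite := by
  refine finite_setOf_natDegree_le_forall_coeff_mem d (S := {p : R[X] | p.natDegree ≤ e}) ?_
  simpa using finite_setOf_natDegree_le_forall_coeff_mem e (Set.finite_univ (α := R))

lemma natDegree_le_one_of_coeff_two_eq_zero (hP : P.natDegree ≤ 2) (h : P.coeff 2 = 0) :
    P.natDegree ≤ 1 := by
  refine natDegree_le_iff_coeff_eq_zero.2 fun k hk => ?_
  obtain rfl | hk : k = 2 ∨ 2 < k := by omega
  exacts [h, coeff_eq_zero_of_natDegree_lt (hP.trans_lt hk)]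

/-- The combination of `P` and `Q` in which the terms in `X ^ 2` cancel, used to
pass from two quadratic polynomials to a linear one. -/
def eliminateSq (P Q : R[X][X]) : R[X][X] := C (Q.coeff 2) * P - C (P.coeff 2) * Q

lemma natDegree_eliminateSq_le (hP : P.natDegree ≤ 2) (hQ : Q.natDegree ≤ 2) :
    (eliminateSq P Q).natDegree ≤ 1 := by
  refine natDegree_le_one_of_coeff_two_eq_zero ?_ ?_
  · exact natDegree_sub_le_of_le ((natDegree_C_mul_le _ _).trans hP)
      ((natDegree_C_mul_le _ _).trans hQ)
  · rw [eliminateSq, coeff_sub, coeff_C_mul, coeff_C_mul, mul_comm, sub_self]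

lemma CoeffNatDegreeLE.eliminateSq (hP : CoeffNatDegreeLE P d) (hQ : CoeffNatDegreeLE Q e) :
    CoeffNatDegreeLE (eliminateSq P Q) (d + e) :=
  .sub ((CoeffNatDegreeLE.mul (.C (hQ 2)) hP).mono (add_comm e d).le) (.mul (.C (hP 2)) hQ)

end Height

section Evaluation

variable {F : Type} [Field F]

lemma evalK_add (P Q : F[X][X]) (ξ : K F) : evalK F (P + Q) ξ = evalK F P ξ + evalK F Q ξ :=
  eval₂_add _ _

lemma evalK_sub (P Q : F[X][X]) (ξ : K F) : evalK F (P - Q) ξ = evalK F P ξ - evalK F Q ξ :=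
  eval₂_sub _

lemma evalK_mul (P Q : F[X][X]) (ξ : K F) : evalK F (P * Q) ξ = evalK F P ξ * evalK F Q ξ :=
  eval₂_mul _ _

lemma evalK_C (p : F[X]) (ξ : K F) : evalK F (C p) ξ = polyToK F p :=
  eval₂_C _ _

lemma evalK_X (ξ : K F) : evalK F X ξ = ξ :=
  eval₂_X _ _

lemma coeff_polyToK (p : F[X]) (z : ℤ) :
    (polyToK F p).coeff z = if z ≤ 0 then p.coeff (-z).toNat else 0 := by
  induction p using Polynomial.induction_on' with
  | add p q hp hq =>
    rw [map_add, HahnSeries.coeff_add, hp, hq]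
    split_ifs <;> simp
  | monomial n a =>
    have hsingle : polyToK F (monomial n a) = HahnSeries.single (-(n : ℤ)) a := by
      simp [polyToK, TT, HahnSeries.C_apply, HahnSeries.single_mul_single]
    rw [hsingle, HahnSeries.coeff_single, coeff_monomial]
    grind

lemma polyToK_injective : Function.Injective (polyToK F) :=
  (injective_iff_map_eq_zero _).2 fun p hp => by
    ext n
    simpa [hp] using (coeff_polyToK p (-(n : ℤ))).symm

lemma polyToK_ne_zero {p : F[X]} (hp : p ≠ 0) : polyToK F p ≠ 0 :=
  (map_ne_zero_iff _ polyToK_injective).2 hp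

lemma order_polyToK {p : F[X]} (hp : p ≠ 0) : (polyToK F p).order = -(p.natDegree : ℤ) := by
  refine le_antisymm (HahnSeries.order_le_of_coeff_ne_zero (by simp [coeff_polyToK, hp])) ?_
  by_contra! h
  refine HahnSeries.coeff_order_eq_zero.not.2 (polyToK_ne_zero hp) ?_
  rw [coeff_polyToK, if_pos (by omega), coeff_eq_zero_of_natDegree_lt (by omega)]

end Evaluation

section Convergents

variable {F : Type} [Field F] {b : ℕ → F[X]}

/-- The degree of `q_m`, as the sum of the degrees of the first `m` letters. -/
def degSum (b : ℕ → F[X]) (m : ℕ) : ℕ := ∑ k ∈ Finset.range m, (b k).natDegree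

lemma degSum_succ (b : ℕ → F[X]) (m : ℕ) :
    degSum b (m + 1) = degSum b m + (b m).natDegree :=
  Finset.sum_range_succ _ _

lemma degSum_mono (b : ℕ → F[X]) : Monotone (degSum b) :=
  monotone_nat_of_le_succ fun m => by rw [degSum_succ]; exact Nat.le_add_right _ _

lemma degSum_add_le (hb : ∀ n, 0 < (b n).natDegree) (i n : ℕ) :
    degSum b i + n ≤ degSum b (i + n) := by
  induction n with
  | zero => rfl
  | succ n ih =>
    rw [← add_assoc, ← add_assoc, degSum_succ]
    exact add_le_add ih (hb (i + n))

lemma le_degSum (hb : ∀ n, 0 < (b n).natDegree) (n : ℕ) : n ≤ degSum b n := by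
  simpa [degSum] using degSum_add_le hb 0 n

lemma exists_degSum_le_lt_degSum_succ (hb : ∀ n, 0 < (b n).natDegree) (t : ℕ) :
    ∃ m, degSum b m ≤ t ∧ t < degSum b (m + 1) := by
  have hex : ∃ m, t < degSum b (m + 1) := ⟨t, le_degSum hb (t + 1)⟩
  refine ⟨Nat.find hex, not_lt.1 fun hlt => ?_, Nat.find_spec hex⟩
  rcases hm : Nat.find hex with _ | m <;> rw [hm] at hlt
  · simp [degSum] at hlt
  · exact Nat.find_min hex (hm ▸ m.lt_succ_self) hlt

lemma qSeq_cfA_add_two (b : ℕ → F[X]) (m : ℕ) :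
    qSeq F (cfA F b) (m + 2) = b m * qSeq F (cfA F b) (m + 1) + qSeq F (cfA F b) m := by
  simp [qSeq, cfA]

lemma pSeq_cfA_add_two (b : ℕ → F[X]) (m : ℕ) :
    pSeq F (cfA F b) (m + 2) = b m * pSeq F (cfA F b) (m + 1) + pSeq F (cfA F b) m := by
  simp [pSeq, cfA]

lemma qSeq_succ_mul_pSeq_sub (b : ℕ → F[X]) (m : ℕ) :
    qSeq F (cfA F b) (m + 1) * pSeq F (cfA F b) m -
      qSeq F (cfA F b) m * pSeq F (cfA F b) (m + 1) = (-1) ^ m := by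
  induction m with
  | zero => simp [qSeq, pSeq]
  | succ m ih =>
    rw [qSeq_cfA_add_two, pSeq_cfA_add_two, pow_succ, ← ih]
    ring

lemma exists_qSeq_mul_add_pSeq_mul_ne_zero (b : ℕ → F[X]) (m : ℕ) {r₀ r₁ : F[X]}
    (hr : r₀ ≠ 0 ∨ r₁ ≠ 0) :
    ∃ k, (k = m ∨ k = m + 1) ∧ qSeq F (cfA F b) k * r₀ + pSeq F (cfA F b) k * r₁ ≠ 0 := by
  by_contra! hzero
  have hm := hzero m (.inl rfl)
  have hm' := hzero (m + 1) (.inr rfl)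
  have hdet := qSeq_succ_mul_pSeq_sub b m
  have hunit : (-1 : F[X]) ^ m ≠ 0 := pow_ne_zero _ (neg_ne_zero.2 one_ne_zero)
  rcases hr with hr | hr <;> refine mul_ne_zero hunit hr ?_ <;> rw [← hdet]
  · linear_combination pSeq F (cfA F b) m * hm' - pSeq F (cfA F b) (m + 1) * hm
  · linear_combination qSeq F (cfA F b) (m + 1) * hm - qSeq F (cfA F b) m * hm'

/-- The linear form `q X - p` of the convergents `p / q` of `[0; b 0, b 1, …]`, indexed as
`qSeq` and `pSeq`: `convergentPoly b m` is `q_{m-1} X - p_{m-1}`. -/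
def convergentPoly (b : ℕ → F[X]) (m : ℕ) : F[X][X] :=
  C (qSeq F (cfA F b) m) * X - C (pSeq F (cfA F b) m)

lemma convergentPoly_add_two (b : ℕ → F[X]) (m : ℕ) :
    convergentPoly b (m + 2) = C (b m) * convergentPoly b (m + 1) + convergentPoly b m := by
  simp only [convergentPoly, qSeq_cfA_add_two, pSeq_cfA_add_two, map_add, map_mul]
  ring

lemma natDegree_convergentPoly_le (b : ℕ → F[X]) (m : ℕ) :
    (convergentPoly b m).natDegree ≤ 1 := by
  unfold convergentPoly
  compute_degree

lemma convergentPoly_coeff_one (b : ℕ → F[X]) (m : ℕ) :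
    (convergentPoly b m).coeff 1 = qSeq F (cfA F b) m := by
  simp [convergentPoly, coeff_C]

lemma coeffNatDegreeLE_convergentPoly (b : ℕ → F[X]) (m : ℕ) :
    CoeffNatDegreeLE (convergentPoly b m) (degSum b m) ∧
      CoeffNatDegreeLE (convergentPoly b (m + 1)) (degSum b m) := by
  induction m with
  | zero =>
    constructor <;> intro k <;> rcases k with _ | _ | k <;>
      simp [convergentPoly, qSeq, pSeq, cfA, coeff_X, coeff_one]
  | succ m ih =>
    refine ⟨ih.2.mono (degSum_mono b m.le_succ), ?_⟩
    rw [convergentPoly_add_two]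
    refine .add ?_ (ih.1.mono (degSum_mono b m.le_succ))
    rw [degSum_succ, add_comm (degSum b m)]
    exact .mul (.C le_rfl) ih.2

lemma natDegree_qSeq_le (b : ℕ → F[X]) (m : ℕ) :
    (qSeq F (cfA F b) m).natDegree ≤ degSum b m ∧
      (qSeq F (cfA F b) (m + 1)).natDegree ≤ degSum b m := by
  obtain ⟨h, h'⟩ := coeffNatDegreeLE_convergentPoly b m
  rw [← convergentPoly_coeff_one b m, ← convergentPoly_coeff_one b (m + 1)]
  exact ⟨h 1, h' 1⟩

lemma degree_qSeq_succ (hb : ∀ n, 0 < (b n).natDegree) (m : ℕ) :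
    (qSeq F (cfA F b) (m + 1)).degree = degSum b m := by
  induction m with
  | zero => simp [qSeq, degSum]
  | succ m ih =>
    have hlead : (b m * qSeq F (cfA F b) (m + 1)).degree = degSum b (m + 1) := by
      rw [degree_mul, ih, degSum_succ, degree_eq_natDegree (ne_zero_of_natDegree_gt (hb m)),
        ← Nat.cast_add, add_comm]
    have hlt : (qSeq F (cfA F b) m).degree < (b m * qSeq F (cfA F b) (m + 1)).degree := by
      rw [hlead, degSum_succ]
      exact degree_le_natDegree.trans_lt
        (Nat.cast_lt.2 (((natDegree_qSeq_le b m).1).trans_lt (Nat.lt_add_of_pos_right (hb m))))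
    rw [qSeq_cfA_add_two, degree_add_eq_left_of_degree_lt hlt, hlead]

lemma evalK_convergentPoly (b : ℕ → F[X]) (ξ : K F) (m : ℕ) :
    evalK F (convergentPoly b m) ξ =
      polyToK F (qSeq F (cfA F b) m) * ξ - polyToK F (pSeq F (cfA F b) m) := by
  rw [convergentPoly, evalK_sub, evalK_mul, evalK_C, evalK_C, evalK_X]

/-- The quadratic polynomial whose zeros are the `ξ` with equal complete quotients
`-L i ξ / L (i+1) ξ` and `-L j ξ / L (j+1) ξ` at the positions `i` and `j`, where
`L = convergentPoly b`. -/
def quasiPeriodPoly (b : ℕ → F[X]) (i j : ℕ) : F[X][X] :=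
  convergentPoly b i * convergentPoly b (j + 1) - convergentPoly b (i + 1) * convergentPoly b j

lemma quasiPeriodPoly_succ (b : ℕ → F[X]) (i j : ℕ) :
    quasiPeriodPoly b (i + 1) (j + 1) =
      C (b j - b i) * (convergentPoly b (i + 1) * convergentPoly b (j + 1)) -
        quasiPeriodPoly b i j := by
  simp only [quasiPeriodPoly, convergentPoly_add_two, map_sub]
  ring

lemma natDegree_quasiPeriodPoly_le (b : ℕ → F[X]) (i j : ℕ) :
    (quasiPeriodPoly b i j).natDegree ≤ 2 := by
  have hmul (k l : ℕ) : (convergentPoly b k * convergentPoly b l).natDegree ≤ 2 :=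
    natDegree_mul_le_of_le (natDegree_convergentPoly_le b k) (natDegree_convergentPoly_le b l)
  exact natDegree_sub_le_of_le (hmul i (j + 1)) (hmul (i + 1) j)

lemma coeffNatDegreeLE_quasiPeriodPoly (b : ℕ → F[X]) (i j : ℕ) :
    CoeffNatDegreeLE (quasiPeriodPoly b i j) (degSum b i + degSum b j) :=
  have hi := coeffNatDegreeLE_convergentPoly b i
  have hj := coeffNatDegreeLE_convergentPoly b j
  .sub (.mul hi.1 hj.2) (.mul hi.2 hj.1)

end Convergents

section AbsoluteValue

variable {Fq}
variable {f g : K Fq} {B : ℝ}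

local notation "𝔮" => (Fintype.card Fq : ℝ)

lemma one_lt_card : 1 < 𝔮 :=
  Nat.one_lt_cast.2 Fintype.one_lt_card

lemma card_pos : 0 < 𝔮 :=
  one_pos.trans one_lt_card

lemma inv_card_pow_le {m n : ℕ} (h : m ≤ n) : (𝔮 ^ n)⁻¹ ≤ (𝔮 ^ m)⁻¹ :=
  inv_anti₀ (pow_pos card_pos m) (pow_le_pow_right₀ one_lt_card.le h)

lemma inv_card_pow_lt {m n : ℕ} (h : m < n) : (𝔮 ^ n)⁻¹ < (𝔮 ^ m)⁻¹ :=
  inv_strictAnti₀ (pow_pos card_pos m) (pow_lt_pow_right₀ one_lt_card h)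

lemma kabs_zero : kabs Fq 0 = 0 :=
  if_pos rfl

lemma kabs_of_ne_zero (hf : f ≠ 0) : kabs Fq f = 𝔮 ^ (-f.order) :=
  if_neg hf

lemma kabs_pos (hf : f ≠ 0) : 0 < kabs Fq f := by
  rw [kabs_of_ne_zero hf]
  exact zpow_pos card_pos _

lemma kabs_nonneg (f : K Fq) : 0 ≤ kabs Fq f := by
  rcases eq_or_ne f 0 with rfl | hf
  · exact kabs_zero.ge
  · exact (kabs_pos hf).le

lemma ne_zero_of_kabs_pos (hf : 0 < kabs Fq f) : f ≠ 0 := by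
  rintro rfl
  exact hf.ne' kabs_zero

lemma kabs_mul (f g : K Fq) : kabs Fq (f * g) = kabs Fq f * kabs Fq g := by
  rcases eq_or_ne f 0 with rfl | hf
  · simp [kabs_zero]
  rcases eq_or_ne g 0 with rfl | hg
  · simp [kabs_zero]
  rw [kabs_of_ne_zero hf, kabs_of_ne_zero hg, kabs_of_ne_zero (mul_ne_zero hf hg),
    HahnSeries.order_mul hf hg, neg_add, zpow_add₀ card_pos.ne']

lemma kabs_neg (f : K Fq) : kabs Fq (-f) = kabs Fq f := by
  rcases eq_or_ne f 0 with rfl | hf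
  · rw [neg_zero]
  · rw [kabs_of_ne_zero hf, kabs_of_ne_zero (neg_ne_zero.2 hf), HahnSeries.order_neg]

lemma kabs_add_le_max (f g : K Fq) : kabs Fq (f + g) ≤ max (kabs Fq f) (kabs Fq g) := by
  rcases eq_or_ne f 0 with rfl | hf
  · simp
  rcases eq_or_ne g 0 with rfl | hg
  · simp
  rcases eq_or_ne (f + g) 0 with hfg | hfg
  · rw [hfg, kabs_zero]
    exact le_max_of_le_left (kabs_nonneg f)
  rw [kabs_of_ne_zero hf, kabs_of_ne_zero hg, kabs_of_ne_zero hfg]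
  refine le_max_iff.2 ((min_le_iff.1 (HahnSeries.min_order_le_order_add hfg)).imp ?_ ?_) <;>
    exact fun h => zpow_le_zpow_right₀ one_lt_card.le (neg_le_neg h)

lemma kabs_sub_lt (hf : kabs Fq f < B) (hg : kabs Fq g < B) : kabs Fq (f - g) < B := by
  rw [sub_eq_add_neg]
  exact (kabs_add_le_max f (-g)).trans_lt (max_lt hf ((kabs_neg g).trans_lt hg))

lemma le_kabs_of_le_kabs_sub (h : B ≤ kabs Fq (f - g)) (hg : kabs Fq g < B) : B ≤ kabs Fq f :=
  not_lt.1 fun hf => (kabs_sub_lt hf hg).not_ge h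

lemma kabs_polyToK {p : Fq[X]} (hp : p ≠ 0) : kabs Fq (polyToK Fq p) = 𝔮 ^ p.natDegree := by
  rw [kabs_of_ne_zero (polyToK_ne_zero hp), order_polyToK hp, neg_neg, zpow_natCast]

lemma kabs_one : kabs Fq 1 = 1 := by
  simpa using kabs_polyToK (Fq := Fq) one_ne_zero

lemma one_le_kabs_polyToK {p : Fq[X]} (hp : p ≠ 0) : 1 ≤ kabs Fq (polyToK Fq p) := by
  rw [kabs_polyToK hp]
  exact one_le_pow₀ one_lt_card.le

lemma kabs_polyToK_le {p : Fq[X]} {e : ℕ} (h : p.natDegree ≤ e) :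
    kabs Fq (polyToK Fq p) ≤ 𝔮 ^ e := by
  rcases eq_or_ne p 0 with rfl | hp
  · simp [kabs_zero]
  · exact (kabs_polyToK hp).trans_le (pow_le_pow_right₀ one_lt_card.le h)

lemma natDegree_le_log_div_log {p : Fq[X]} (hp : p ≠ 0) {A : ℝ}
    (hA : kabs Fq (polyToK Fq p) ≤ A) :
    (p.natDegree : ℝ) ≤ Real.log A / Real.log 𝔮 := by
  rw [le_div_iff₀ (Real.log_pos one_lt_card), ← Real.log_pow]
  exact Real.log_le_log (pow_pos card_pos _) ((kabs_polyToK hp).ge.trans hA)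

lemma inv_card_pow_add_le_kabs {p : Fq[X]} {d e : ℕ} (hp : p.natDegree ≤ d)
    (h : (𝔮 ^ e)⁻¹ ≤ kabs Fq (polyToK Fq p * f)) : (𝔮 ^ (d + e))⁻¹ ≤ kabs Fq f := by
  rw [pow_add, mul_inv, inv_mul_le_iff₀ (pow_pos card_pos d)]
  rw [kabs_mul] at h
  exact h.trans (mul_le_mul_of_nonneg_right (kabs_polyToK_le hp) (kabs_nonneg f))

end AbsoluteValue

section Exponent

variable {Fq}
variable {P : Fq[X][X]}

local notation "𝔮" => (Fintype.card Fq : ℝ)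

lemma exists_Hpoly_eq (hP : P ≠ 0) : ∃ h : ℕ, CoeffNatDegreeLE P h ∧ Hpoly Fq P = 𝔮 ^ h := by
  obtain ⟨k, hk, hmax⟩ := Finset.exists_max_image P.support (fun k => (P.coeff k).natDegree)
    (support_nonempty.2 hP)
  have hcoeff : CoeffNatDegreeLE P (P.coeff k).natDegree := fun l => by
    rcases eq_or_ne (P.coeff l) 0 with hl | hl
    · simp [hl]
    · exact hmax l (mem_support_iff.2 hl)
  have hle (l : ℕ) : kabs Fq (polyToK Fq (P.coeff l)) ≤ 𝔮 ^ (P.coeff k).natDegree :=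
    kabs_polyToK_le (hcoeff l)
  refine ⟨_, hcoeff, le_antisymm (ciSup_le hle) ?_⟩
  rw [← kabs_polyToK (mem_support_iff.1 hk)]
  exact le_ciSup (f := fun l => kabs Fq (polyToK Fq (P.coeff l)))
    ⟨_, Set.forall_mem_range.2 hle⟩ k

lemma le_coe_mul_of_forall_lt_coe {x d : EReal} {c : ℝ} (hc : 0 < c)
    (h : ∀ δ : ℝ, d < δ → x ≤ ((c * δ : ℝ) : EReal)) : x ≤ c * d := by
  have hc' : (0 : EReal) < c := EReal.coe_pos.2 hc
  refine EReal.le_of_forall_lt_iff_le.1 fun z hz => ?_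
  have hdz : d < ((z / c : ℝ) : EReal) := by
    rw [EReal.coe_div, EReal.lt_div_iff hc' (EReal.coe_ne_top c), mul_comm]
    exact hz
  simpa [mul_div_cancel₀ z hc.ne'] using h _ hdz

lemma wExp_le_of_eventually {d : ℕ} {ξ : K Fq} {W : ℝ}
    (hW : ∀ᶠ h : ℕ in atTop, ∀ P : Fq[X][X], P.natDegree ≤ d → CoeffNatDegreeLE P h →
      evalK Fq P ξ ≠ 0 → ∃ e : ℕ, (e : ℝ) ≤ W * h ∧ (𝔮 ^ e)⁻¹ ≤ kabs Fq (evalK Fq P ξ)) :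
    wExp Fq d ξ ≤ W := by
  obtain ⟨h₀, hh₀⟩ := eventually_atTop.1 hW
  refine sSup_le ?_
  rintro _ ⟨w, rfl, hw⟩
  obtain ⟨P, ⟨hdeg, hpos, hle⟩, hP⟩ :=
    hw.exists_notMem_finite (finite_setOf_coeffNatDegreeLE d (h₀ + 1))
  have hP0 : P ≠ 0 := by
    rintro rfl
    exact hP ⟨hdeg, fun _ => by simp⟩
  obtain ⟨h, hcoeff, hheight⟩ := exists_Hpoly_eq hP0
  have hh : h₀ + 1 < h := not_le.1 fun hle => hP ⟨hdeg, hcoeff.mono hle⟩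
  obtain ⟨e, heW, hPe⟩ := hh₀ h (by omega) P hdeg hcoeff (ne_zero_of_kabs_pos hpos)
  have hwe : h * w ≤ e := by
    have hexp : 𝔮 ^ (-e : ℝ) ≤ 𝔮 ^ (h * -w) := by
      rw [Real.rpow_neg card_pos.le, Real.rpow_natCast, Real.rpow_mul card_pos.le,
        Real.rpow_natCast, ← hheight]
      exact hPe.trans hle
    have := (Real.rpow_le_rpow_left_iff one_lt_card).1 hexp
    linarith
  have hhpos : (0 : ℝ) < h := Nat.cast_pos.2 (by omega)
  exact EReal.coe_le_coe (le_of_mul_le_mul_left (by linarith) hhpos)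

end Exponent

section Words

variable {α : Type*} {b : ℕ → α} {i j l n : ℕ} {ρ : ℝ}

/-- The blocks of length `n` of the infinite word `b` starting at `i` and `j` coincide. -/
def SameBlock (b : ℕ → α) (i j n : ℕ) : Prop := ∀ k < n, b (i + k) = b (j + k)

lemma SameBlock.apply_mod {d : ℕ} (h : SameBlock b i (i + d) l) {k : ℕ} (hk : k < d + l) :
    b (i + k % d) = b (i + k) := by
  induction k using Nat.strong_induction_on with
  | _ k ih =>
    rcases lt_or_ge k d with hkd | hkd
    · rw [Nat.mod_eq_of_lt hkd]
    rcases d.eq_zero_or_pos with rfl | hd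
    · rw [Nat.mod_zero]
    rw [Nat.mod_eq_sub_mod hkd, ih (k - d) (by omega) (by omega), h (k - d) (by omega)]
    congr 1
    omega

lemma flatten_replicate_map_range {f : ℕ → α} {d : ℕ} (hf : f.Periodic d) (n : ℕ) :
    (List.replicate n ((List.range d).map f)).flatten = (List.range (n * d)).map f := by
  induction n with
  | zero => simp
  | succ n ih =>
    have hshift : f ∘ (n * d + ·) = f := funext fun k => by
      rw [Function.comp_apply, add_comm]
      exact hf.nat_mul n k
    rw [List.replicate_succ', List.flatten_append, ih, List.flatten_singleton, Nat.succ_mul,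
      List.range_add, List.map_append, List.map_map, hshift]

lemma wordPow_map_range {f : ℕ → α} {d : ℕ} (hf : f.Periodic d) (hd : 0 < d) (m : ℕ) :
    wordPow ((List.range d).map f) (m / d) = (List.range m).map f := by
  have hdiv : (m / d : ℕ) * d + m % d = m := Nat.div_add_mod' m d
  have hceil : ((m : ℝ) / d - (m / d : ℕ)) * d = (m % d : ℕ) := by
    rw [sub_mul, div_mul_cancel₀ _ (Nat.cast_ne_zero.2 hd.ne'), sub_eq_iff_eq_add']
    exact_mod_cast hdiv.symm
  have hshift : f ∘ (m / d * d + ·) = f := funext fun k => by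
    rw [Function.comp_apply, add_comm]
    exact hf.nat_mul (m / d) k
  rw [wordPow, Nat.floor_div_natCast, Nat.floor_natCast, List.length_map, List.length_range, hceil,
    Nat.ceil_natCast, flatten_replicate_map_range hf, ← List.map_take, List.take_range,
    min_eq_left (Nat.mod_lt m hd).le]
  conv_rhs => rw [← hdiv, List.range_add, List.map_append, List.map_map, hshift]

lemma isPrefixOfSeq_map_range (b : ℕ → α) (n : ℕ) : IsPrefixOfSeq ((List.range n).map b) b :=
  fun k hk => by simp

lemma satisfiesCond_of_forall_exists_sameBlock
    (h : ∀ N : ℕ, ∃ i j l, i < j ∧ N ≤ l ∧ SameBlock b i j l ∧ ρ * j ≤ j + l) :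
    SatisfiesCond b ρ := by
  have hword (N : ℕ) : ∃ (U V : List α) (w : ℝ), V ≠ [] ∧ 0 ≤ w ∧
      IsPrefixOfSeq (U ++ wordPow V w) b ∧
      ρ * ((U.length + V.length : ℕ) : ℝ) ≤ ((U.length + (wordPow V w).length : ℕ) : ℝ) ∧
      N ≤ (wordPow V w).length := by
    obtain ⟨i, j, l, hij, hN, hblock, hρ⟩ := h N
    obtain ⟨d, hd, rfl⟩ : ∃ d, 0 < d ∧ j = i + d := ⟨j - i, by omega, by omega⟩
    set f : ℕ → α := fun k => b (i + k % d)
    have hpow : wordPow ((List.range d).map f) ((d + l : ℕ) / d) = (List.range (d + l)).map f :=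
      wordPow_map_range (fun k => by simp [f]) hd _
    have hpre : (List.range i).map b ++ (List.range (d + l)).map f =
        (List.range (i + (d + l))).map b := by
      rw [List.range_add (n := i), List.map_append, List.map_map]
      exact congrArg _ (List.map_congr_left fun k hk => hblock.apply_mod (List.mem_range.1 hk))
    refine ⟨(List.range i).map b, (List.range d).map f, (d + l : ℕ) / d, by simpa using hd.ne',
      by positivity, ?_, ?_, ?_⟩ <;> rw [hpow]
    · exact hpre ▸ isPrefixOfSeq_map_range b _
    · simpa [add_assoc] using hρ
    · simpa using hN.trans (Nat.le_add_left l d)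
  choose U V w hV hw hpre hρ hN using hword
  obtain ⟨t, -, ht⟩ := strictMono_subseq_of_id_le hN
  exact ⟨U ∘ t, V ∘ t, w ∘ t, fun _ => hV _, fun _ => hw _, fun _ => hpre _, fun _ => hρ _, ht⟩

lemma one_le_dioExp (b : ℕ → α) : 1 ≤ dioExp b := by
  have hpow (V : List α) : wordPow V 1 = V := by simp [wordPow]
  refine le_sSup ⟨1, rfl, fun _ => [], fun n => (List.range (n + 1)).map b, fun _ => 1, ?_, ?_, ?_,
    ?_, ?_⟩
  · simp
  · simp
  · exact fun n => by simpa only [hpow, List.nil_append] using isPrefixOfSeq_map_range b (n + 1)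
  · simp [hpow]
  · exact fun m n hmn => by simpa [hpow] using hmn

lemma eventually_add_le_of_dioExp_lt (hδ : dioExp b < ρ) :
    ∀ᶠ n : ℕ in atTop, ∀ i j l, i < j → n ≤ l → SameBlock b i j l → (j + l : ℝ) ≤ ρ * j := by
  by_contra hfreq
  refine hδ.not_ge (le_sSup ⟨ρ, rfl, satisfiesCond_of_forall_exists_sameBlock fun N => ?_⟩)
  obtain ⟨n, hNn, hn⟩ := frequently_atTop.1 (not_eventually.1 hfreq) N
  push Not at hn
  obtain ⟨i, j, l, hij, hnl, hblock, hlt⟩ := hn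
  exact ⟨i, j, l, hij, hNn.trans hnl, hblock, hlt.le⟩

lemma exists_sameBlock_mismatch (h : SameBlock b i j n) {B : ℕ}
    (hB : ∀ l, n ≤ l → SameBlock b i j l → l ≤ B) :
    ∃ l, n ≤ l ∧ SameBlock b i j l ∧ b (i + l) ≠ b (j + l) := by
  by_contra! hext
  have hall (l : ℕ) : SameBlock b i j (n + l) := by
    induction l with
    | zero => exact h
    | succ l ih =>
      intro k hk
      rcases Nat.lt_succ_iff_lt_or_eq.1 hk with hk | rfl
      exacts [ih k hk, hext _ (Nat.le_add_right n l) ih]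
  have := hB _ (Nat.le_add_right n (B + 1)) (hall (B + 1))
  omega

lemma exists_sameBlock_of_complexity_le {m : ℕ} (h : complexity b n ≤ m) :
    ∃ i j, i < j ∧ j ≤ m ∧ SameBlock b i j n := by
  set block : ℕ → Fin n → α := fun i k => b (i + k)
  have hcard : (Set.range block).encard < (Finset.range (m + 1) : Set ℕ).encard := by
    rw [Set.encard_coe_eq_coe_finsetCard, Finset.card_range]
    refine lt_of_le_of_lt ?_ (h.trans_lt (Nat.cast_lt.2 m.lt_succ_self))
    exact Set.encard_le_encard (Set.range_subset_iff.2 fun i => ⟨i, fun _ => rfl⟩)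
  obtain ⟨i, hi, j, hj, hne, heq⟩ :=
    Set.exists_ne_map_eq_of_encard_lt_of_maps_to hcard fun i _ => Set.mem_range_self i
  have hblock (k : ℕ) (hk : k < n) : b (i + k) = b (j + k) := congrFun heq ⟨k, hk⟩
  simp only [Finset.coe_range, Set.mem_Iio] at hi hj
  rcases hne.lt_or_gt with hij | hij
  · exact ⟨i, j, hij, by omega, hblock⟩
  · exact ⟨j, i, hij, by omega, fun k hk => (hblock k hk).symm⟩

lemma pos_of_complexity_le {κ : ℕ}
    (hcomp : ∀ᶠ n in atTop, complexity b n ≤ ((κ * n : ℕ) : ℕ∞)) : 0 < κ := by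
  obtain ⟨n, hn⟩ := hcomp.exists
  obtain ⟨i, j, hij, hj, -⟩ := exists_sameBlock_of_complexity_le hn
  exact pos_of_mul_pos_left (by omega : 0 < κ * n) n.zero_le

lemma eventually_exists_sameBlock_mismatch {κ : ℕ}
    (hcomp : ∀ᶠ n in atTop, complexity b n ≤ ((κ * n : ℕ) : ℕ∞)) (hρ : dioExp b < ρ) :
    ∀ᶠ n : ℕ in atTop, ∃ i j l, i < j ∧ j ≤ κ * n ∧ n ≤ l ∧ SameBlock b i j l ∧
      b (i + l) ≠ b (j + l) ∧ (j + l : ℝ) ≤ ρ * j := by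
  filter_upwards [hcomp, eventually_add_le_of_dioExp_lt hρ] with n hn hle
  obtain ⟨i, j, hij, hj, hblock⟩ := exists_sameBlock_of_complexity_le hn
  obtain ⟨l, hnl, hblock', hmismatch⟩ := exists_sameBlock_mismatch hblock (B := ⌊ρ * j⌋₊)
    fun l hnl hl => Nat.le_floor (by linarith [hle i j l hij hnl hl, j.cast_nonneg (α := ℝ)])
  exact ⟨i, j, l, hij, hj, hnl, hblock', hmismatch, hle i j l hij hnl hblock'⟩

end Words

section Approximation

variable {Fq}
variable {b : ℕ → Fq[X]} {ξ : K Fq} {i j m n : ℕ} {P : Fq[X][X]}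

local notation "𝔮" => (Fintype.card Fq : ℝ)

lemma IsCFOf.natDegree_pos (hξ : IsCFOf Fq ξ (cfA Fq b)) (n : ℕ) : 0 < (b n).natDegree := by
  simpa [cfA, Nat.one_le_iff_ne_zero, Nat.pos_iff_ne_zero] using hξ.1 (n + 1) n.succ_pos

lemma kabs_qSeq_succ (hξ : IsCFOf Fq ξ (cfA Fq b)) (m : ℕ) :
    kabs Fq (polyToK Fq (qSeq Fq (cfA Fq b) (m + 1))) = 𝔮 ^ degSum b m := by
  have hdeg := degree_qSeq_succ hξ.natDegree_pos m
  rw [kabs_polyToK (ne_zero_of_degree_gt (n := ⊥) (by simp [hdeg])),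
    natDegree_eq_of_degree_eq_some hdeg]

lemma kabs_evalK_convergentPoly (hξ : IsCFOf Fq ξ (cfA Fq b)) (m : ℕ) :
    kabs Fq (evalK Fq (convergentPoly b m) ξ) = (𝔮 ^ degSum b m)⁻¹ := by
  rw [evalK_convergentPoly]
  rcases m with _ | m
  · simp [qSeq, pSeq, degSum, kabs_neg, kabs_one]
  · set q := polyToK Fq (qSeq Fq (cfA Fq b) (m + 1)) with hq
    have hpos : 0 < 𝔮 ^ degSum b m := pow_pos card_pos _
    have hq0 : q ≠ 0 := ne_zero_of_kabs_pos (hpos.trans_eq (kabs_qSeq_succ hξ m).symm)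
    rw [← mul_div_cancel₀ (polyToK Fq (pSeq Fq (cfA Fq b) (m + 1))) hq0, ← mul_sub,
      kabs_mul, hξ.2 m, ← hq, kabs_qSeq_succ hξ m, kabs_qSeq_succ hξ (m + 1)]
    field_simp

lemma kabs_evalK_convergentPoly_mul (hξ : IsCFOf Fq ξ (cfA Fq b)) (i j : ℕ) :
    kabs Fq (evalK Fq (convergentPoly b i * convergentPoly b j) ξ) =
      (𝔮 ^ (degSum b i + degSum b j))⁻¹ := by
  rw [evalK_mul, kabs_mul, kabs_evalK_convergentPoly hξ, kabs_evalK_convergentPoly hξ, ← mul_inv,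
    pow_add]

lemma inv_card_pow_degSum_le_kabs_evalK (hξ : IsCFOf Fq ξ (cfA Fq b)) (hdeg : P.natDegree ≤ 1)
    (hlead : (P.coeff 1).natDegree < degSum b m) (hP : evalK Fq P ξ ≠ 0) :
    (𝔮 ^ degSum b m)⁻¹ ≤ kabs Fq (evalK Fq P ξ) := by
  have heval : evalK Fq P ξ = polyToK Fq (P.coeff 1) * ξ + polyToK Fq (P.coeff 0) := by
    conv_lhs => rw [eq_X_add_C_of_natDegree_le_one hdeg]
    rw [evalK_add, evalK_mul, evalK_C, evalK_C, evalK_X]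
  have hcoeff : P.coeff 0 ≠ 0 ∨ P.coeff 1 ≠ 0 := by
    by_contra! h
    simp [heval, h] at hP
  obtain ⟨k, hk, hne⟩ := exists_qSeq_mul_add_pSeq_mul_ne_zero b m hcoeff
  have hq : (qSeq Fq (cfA Fq b) k).natDegree ≤ degSum b m := by
    rcases hk with rfl | rfl
    exacts [(natDegree_qSeq_le b k).1, (natDegree_qSeq_le b m).2]
  have hcross : 1 ≤ kabs Fq (polyToK Fq (qSeq Fq (cfA Fq b) k) * evalK Fq P ξ -
      polyToK Fq (P.coeff 1) * evalK Fq (convergentPoly b k) ξ) := by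
    convert one_le_kabs_polyToK hne using 2
    rw [heval, evalK_convergentPoly, map_add, map_mul, map_mul]
    ring
  have hsmall : kabs Fq (polyToK Fq (P.coeff 1) * evalK Fq (convergentPoly b k) ξ) < 1 := by
    rw [kabs_mul, kabs_evalK_convergentPoly hξ, ← div_eq_mul_inv, div_lt_one (pow_pos card_pos _)]
    refine (kabs_polyToK_le le_rfl).trans_lt (pow_lt_pow_right₀ one_lt_card (hlead.trans_le ?_))
    exact degSum_mono b (by omega)
  have hlarge := le_kabs_of_le_kabs_sub hcross hsmall
  simpa using inv_card_pow_add_le_kabs (e := 0) hq (by simpa using hlarge)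

lemma kabs_evalK_quasiPeriodPoly_lt (hξ : IsCFOf Fq ξ (cfA Fq b)) (i j : ℕ) :
    kabs Fq (evalK Fq (quasiPeriodPoly b i j) ξ) < (𝔮 ^ (degSum b i + degSum b j))⁻¹ := by
  have hi := hξ.natDegree_pos i
  have hj := hξ.natDegree_pos j
  rw [quasiPeriodPoly, evalK_sub]
  apply kabs_sub_lt <;> rw [kabs_evalK_convergentPoly_mul hξ] <;> apply inv_card_pow_lt <;>
    rw [degSum_succ] <;> omega

lemma kabs_evalK_quasiPeriodPoly_add (h : SameBlock b i j n) :
    kabs Fq (evalK Fq (quasiPeriodPoly b (i + n) (j + n)) ξ) =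
      kabs Fq (evalK Fq (quasiPeriodPoly b i j) ξ) := by
  induction n with
  | zero => rfl
  | succ n ih =>
    rw [← ih fun k hk => h k (by omega), ← add_assoc, ← add_assoc, quasiPeriodPoly_succ,
      h n n.lt_succ_self, sub_self, C_0, zero_mul, zero_sub, evalK, eval₂_neg, kabs_neg, evalK]

lemma inv_card_pow_le_kabs_evalK_quasiPeriodPoly (hξ : IsCFOf Fq ξ (cfA Fq b))
    (hij : b i ≠ b j) :
    (𝔮 ^ (degSum b (i + 1) + degSum b (j + 1)))⁻¹ ≤
      kabs Fq (evalK Fq (quasiPeriodPoly b i j) ξ) := by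
  have hsum : evalK Fq (quasiPeriodPoly b i j) ξ - -evalK Fq (quasiPeriodPoly b (i + 1) (j + 1)) ξ =
      polyToK Fq (b j - b i) *
        evalK Fq (convergentPoly b (i + 1) * convergentPoly b (j + 1)) ξ := by
    rw [quasiPeriodPoly_succ, evalK_sub, evalK_mul (C _), evalK_C]
    ring
  refine le_kabs_of_le_kabs_sub ?_ ((kabs_neg _).trans_lt (kabs_evalK_quasiPeriodPoly_lt hξ _ _))
  rw [hsum, kabs_mul, kabs_evalK_convergentPoly_mul hξ]
  exact le_mul_of_one_le_left (inv_nonneg.2 (pow_pos card_pos _).le)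
    (one_le_kabs_polyToK (sub_ne_zero.2 hij.symm))

lemma inv_card_pow_le_kabs_evalK (hξ : IsCFOf Fq ξ (cfA Fq b)) (hblock : SameBlock b i j n)
    (hmismatch : b (i + n) ≠ b (j + n)) (hdeg : P.natDegree ≤ 2) {h : ℕ}
    (hcoeff : CoeffNatDegreeLE P h) (hP : evalK Fq P ξ ≠ 0)
    (hm : h + (degSum b i + degSum b j) < degSum b m)
    (hmn : h + degSum b m ≤ degSum b (i + n) + degSum b (j + n)) :
    (𝔮 ^ (degSum b i + degSum b j + (degSum b (i + n + 1) + degSum b (j + n + 1))))⁻¹ ≤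
      kabs Fq (evalK Fq P ξ) := by
  set Q := quasiPeriodPoly b i j
  have hQcoeff : CoeffNatDegreeLE Q _ := coeffNatDegreeLE_quasiPeriodPoly b i j
  have hm' : degSum b m ≤ degSum b (i + n + 1) + degSum b (j + n + 1) :=
    ((Nat.le_add_left _ _).trans hmn).trans
      (add_le_add (degSum_mono b (Nat.le_succ _)) (degSum_mono b (Nat.le_succ _)))
  rcases eq_or_ne (P.coeff 2) 0 with hP₂ | hP₂
  · exact (inv_card_pow_le (by omega)).trans (inv_card_pow_degSum_le_kabs_evalK (m := m) hξ
      (natDegree_le_one_of_coeff_two_eq_zero hdeg hP₂) ((hcoeff 1).trans_lt (by omega)) hP)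
  have heval : evalK Fq (eliminateSq P Q) ξ = polyToK Fq (Q.coeff 2) * evalK Fq P ξ -
      polyToK Fq (P.coeff 2) * evalK Fq Q ξ := by
    simp only [eliminateSq, evalK_sub, evalK_mul, evalK_C]
  have hQshift : kabs Fq (evalK Fq Q ξ) = _ := (kabs_evalK_quasiPeriodPoly_add hblock).symm
  rcases eq_or_ne (evalK Fq (eliminateSq P Q) ξ) 0 with hR | hR
  · refine inv_card_pow_add_le_kabs (hQcoeff 2) ?_
    rw [sub_eq_zero.1 (heval.symm.trans hR), kabs_mul, hQshift]
    exact (inv_card_pow_le_kabs_evalK_quasiPeriodPoly hξ hmismatch).trans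
      (le_mul_of_one_le_left (kabs_nonneg _) (one_le_kabs_polyToK hP₂))
  · have hR' := inv_card_pow_degSum_le_kabs_evalK hξ
      (natDegree_eliminateSq_le hdeg (natDegree_quasiPeriodPoly_le b i j))
      ((hcoeff.eliminateSq hQcoeff 1).trans_lt hm) hR
    rw [heval] at hR'
    have hsmall : kabs Fq (polyToK Fq (P.coeff 2) * evalK Fq Q ξ) < (𝔮 ^ degSum b m)⁻¹ := by
      refine not_le.1 fun hle => ?_
      have := (inv_card_pow_add_le_kabs (hcoeff 2) hle).trans_lt
        (hQshift.trans_lt (kabs_evalK_quasiPeriodPoly_lt hξ _ _))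
      exact this.not_ge (inv_card_pow_le hmn)
    exact (inv_card_pow_le (by omega)).trans
      (inv_card_pow_add_le_kabs (hQcoeff 2) (le_kabs_of_le_kabs_sub hR' hsmall))

end Approximation

section Growth

variable {F : Type} [Field F] {b : ℕ → F[X]} {κ : ℕ} {μ M : ℝ}

lemma eventually_forall_le_mul_of_isLittleO {t : ℕ → ℝ} (ht : t =o[atTop] (Nat.cast : ℕ → ℝ))
    (κ : ℕ) {ε : ℝ} (hε : 0 < ε) : ∀ᶠ n : ℕ in atTop, ∀ i ≤ κ * n, |t i| ≤ ε * n := by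
  obtain ⟨N, hN⟩ := eventually_atTop.1 (ht.def (div_pos hε κ.cast_add_one_pos))
  obtain ⟨B, hB⟩ := ((Set.finite_Iio N).image (|t ·|)).bddAbove
  filter_upwards [tendsto_natCast_atTop_atTop.eventually_ge_atTop (B / ε)] with n hn i hi
  rcases lt_or_ge i N with hiN | hiN
  · exact (hB ⟨i, hiN, rfl⟩).trans ((div_le_iff₀' hε).1 hn)
  · have hin : (i : ℝ) ≤ (κ + 1) * n := by
      have : (i : ℝ) ≤ κ * n := by exact_mod_cast hi
      linarith [n.cast_nonneg (α := ℝ)]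
    calc |t i| ≤ ε / (κ + 1) * i := by simpa using hN i hiN
      _ ≤ ε / (κ + 1) * ((κ + 1) * n) := by gcongr
      _ = ε * n := by field_simp

lemma eventually_exists_two_mul_lt_le_three_mul {p : ℕ → Prop} (hp : ∀ᶠ n in atTop, p n)
    (hμ : 0 < μ) : ∀ᶠ h : ℕ in atTop, ∃ n : ℕ, p n ∧ 2 * h < μ * n ∧ μ * n ≤ 3 * h := by
  have htend : Tendsto (fun h : ℕ => ⌊2 * (h : ℝ) / μ⌋₊ + 1) atTop atTop :=
    (tendsto_add_atTop_nat 1).comp (tendsto_nat_floor_atTop.comp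
      ((tendsto_natCast_atTop_atTop.const_mul_atTop two_pos).atTop_div_const hμ))
  filter_upwards [htend.eventually hp, tendsto_natCast_atTop_atTop.eventually_ge_atTop μ]
    with h hph hμh
  have hlt : 2 * (h : ℝ) / μ < ⌊2 * (h : ℝ) / μ⌋₊ + 1 := Nat.lt_floor_add_one _
  have hle : (⌊2 * (h : ℝ) / μ⌋₊ : ℝ) ≤ 2 * h / μ := Nat.floor_le (by positivity)
  rw [div_lt_iff₀' hμ] at hlt
  rw [le_div_iff₀' hμ] at hle
  refine ⟨_, hph, ?_, ?_⟩ <;> push_cast <;> linarith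

/-- The degrees of the denominators `q_n` grow linearly, with rate at most `M` and, over the
windows `[i, i + n]` with `i ≤ κ n`, with rate at least `μ`; moreover no single partial quotient
contributes substantially. -/
structure HasLinearGrowth (b : ℕ → F[X]) (κ : ℕ) (μ M : ℝ) : Prop where
  pos : 0 < μ
  eventually_le_sub :
    ∀ᶠ n : ℕ in atTop, ∀ i ≤ κ * n, μ * n ≤ (degSum b (i + n) : ℝ) - degSum b i
  eventually_le : ∀ᶠ n : ℕ in atTop, (degSum b n : ℝ) ≤ M * n
  isLittleO : (fun i => ((b i).natDegree : ℝ)) =o[atTop] (Nat.cast : ℕ → ℝ)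

namespace HasLinearGrowth

lemma one_le (hg : HasLinearGrowth b κ μ M) (hb : ∀ n, 0 < (b n).natDegree) : 1 ≤ M := by
  obtain ⟨n, hn, hpos⟩ := (hg.eventually_le.and (eventually_gt_atTop 0)).exists
  have hle : (n : ℝ) ≤ M * n := (Nat.cast_le.2 (le_degSum hb n)).trans hn
  exact (le_mul_iff_one_le_left (Nat.cast_pos.2 hpos)).1 hle

lemma eventually_forall_le (hg : HasLinearGrowth b κ μ M) :
    ∀ᶠ n : ℕ in atTop, ∀ i ≤ κ * n, (degSum b i : ℝ) ≤ M * (κ * n) := by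
  rcases κ.eq_zero_or_pos with rfl | hκ
  · simp [degSum]
  filter_upwards [(tendsto_id.const_mul_atTop' hκ).eventually hg.eventually_le] with n hn i hi
  exact (Nat.cast_le.2 (degSum_mono b hi)).trans (by simpa using hn)

lemma eventually_exists_degSum_between (hg : HasLinearGrowth b κ μ M)
    (hb : ∀ n, 0 < (b n).natDegree) :
    ∀ᶠ n : ℕ in atTop, ∀ h i j l : ℕ, 2 * h < μ * n → i ≤ κ * n → j ≤ κ * n → n ≤ l →
      ∃ m, h + (degSum b i + degSum b j) < degSum b m ∧
        h + degSum b m ≤ degSum b (i + l) + degSum b (j + l) := by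
  set κ' := ⌈μ / 2 + 2 * M * κ⌉₊
  filter_upwards [hg.eventually_forall_le, hg.eventually_le_sub,
    eventually_forall_le_mul_of_isLittleO hg.isLittleO κ' hg.pos]
    with n hle hsub hjump h i j l hh hi hj hl
  obtain ⟨m, hm, hm'⟩ :=
    exists_degSum_le_lt_degSum_succ hb (h + (degSum b i + degSum b j))
  have hmR : (degSum b m : ℝ) ≤ h + (degSum b i + degSum b j) := by exact_mod_cast hm
  have hmn : m ≤ κ' * n := by
    have hceil : μ / 2 + 2 * M * κ ≤ κ' := Nat.le_ceil _
    have hmm : (m : ℝ) ≤ degSum b m := Nat.cast_le.2 (le_degSum hb m)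
    have : (m : ℝ) ≤ κ' * n := calc
      (m : ℝ) ≤ (μ / 2 + 2 * M * κ) * n := by linarith [hle i hi, hle j hj]
      _ ≤ κ' * n := by gcongr
    exact_mod_cast this
  have hjumpm : ((b m).natDegree : ℝ) ≤ μ * n := (le_abs_self _).trans (hjump m hmn)
  have hil : (degSum b (i + n) : ℝ) ≤ degSum b (i + l) :=
    Nat.cast_le.2 (degSum_mono b (by omega))
  have hjl : (degSum b (j + n) : ℝ) ≤ degSum b (j + l) :=
    Nat.cast_le.2 (degSum_mono b (by omega))
  refine ⟨m + 1, hm', ?_⟩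
  rw [degSum_succ, ← Nat.cast_le (α := ℝ)]
  push_cast
  linarith [hsub i hi, hsub j hj]

lemma eventually_degSum_add_le (hg : HasLinearGrowth b κ μ M) (hb : ∀ n, 0 < (b n).natDegree) :
    ∀ᶠ n : ℕ in atTop, ∀ i j l (δ : ℝ), i < j → j ≤ κ * n → n ≤ l → j + l ≤ δ * j →
      (degSum b i + degSum b j + (degSum b (i + l + 1) + degSum b (j + l + 1)) : ℝ) ≤
        6 * κ * M * δ * n := by
  have hM : 0 ≤ M := zero_le_one.trans (hg.one_le hb)
  filter_upwards [hg.eventually_forall_le, eventually_forall_ge_atTop.2 hg.eventually_le]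
    with n hle hlin i j l δ hij hj hnl hδ
  have hj1 : (1 : ℝ) ≤ j := Nat.one_le_cast.2 (by omega)
  have hjn : (j : ℝ) ≤ κ * n := by exact_mod_cast hj
  have hδ1 : 1 ≤ δ := by nlinarith [l.cast_nonneg (α := ℝ)]
  have hδn : δ * j ≤ δ * (κ * n) := by gcongr
  have hκn : κ * n ≤ δ * (κ * n) := le_mul_of_one_le_left (by positivity) hδ1
  have hjl : (degSum b (j + l + 1) : ℝ) ≤ M * (2 * (δ * (κ * n))) :=
    (hlin _ (by omega)).trans (by gcongr; push_cast; linarith)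
  have hil : (degSum b (i + l + 1) : ℝ) ≤ M * (2 * (δ * (κ * n))) :=
    (Nat.cast_le.2 (degSum_mono b (by omega))).trans hjl
  have hjs : (degSum b j : ℝ) ≤ M * (δ * (κ * n)) := (hle j hj).trans (by gcongr)
  have his : (degSum b i : ℝ) ≤ M * (δ * (κ * n)) :=
    (Nat.cast_le.2 (degSum_mono b hij.le)).trans hjs
  linarith

end HasLinearGrowth

lemma hasLinearGrowth_of_natDegree_le (hb : ∀ n, 0 < (b n).natDegree)
    (hM : ∀ n, ((b n).natDegree : ℝ) ≤ M) : HasLinearGrowth b κ 1 M where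
  pos := one_pos
  eventually_le_sub := .of_forall fun n i _ => by
    rw [one_mul, le_sub_iff_add_le']
    exact_mod_cast degSum_add_le hb i n
  eventually_le := .of_forall fun n => by
    rw [degSum, Nat.cast_sum, mul_comm, ← nsmul_eq_mul]
    simpa using Finset.sum_le_card_nsmul (Finset.range n) _ M fun k _ => hM k
  isLittleO := by
    refine (Asymptotics.IsBigO.of_bound M (.of_forall fun i => ?_)).trans_isLittleO
      ((Asymptotics.isLittleO_const_left (c := (1 : ℝ))).2
        (.inr (tendsto_norm_atTop_atTop.comp tendsto_natCast_atTop_atTop)))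
    simpa using hM i

lemma hasLinearGrowth_of_isLittleO {r ε : ℝ}
    (hr : (fun n => (degSum b n : ℝ) - r * n) =o[atTop] (Nat.cast : ℕ → ℝ)) (hε : 0 < ε)
    (hεr : ε < r) : HasLinearGrowth b κ (r - ε) (r + ε) where
  pos := sub_pos.2 hεr
  eventually_le_sub := by
    filter_upwards [eventually_forall_le_mul_of_isLittleO hr (κ + 1) (half_pos hε)] with n hn i hi
    have hi' := abs_le.1 (hn i (by linarith))
    have hin := abs_le.1 (hn (i + n) (by linarith))
    push_cast at hin
    linarith
  eventually_le := by
    filter_upwards [hr.def hε] with n hn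
    have := (le_abs_self _).trans hn
    rw [Real.norm_natCast] at this
    linarith
  isLittleO := by
    refine Asymptotics.IsLittleO.of_bound fun c hc => ?_
    filter_upwards [eventually_forall_le_mul_of_isLittleO hr 2 (div_pos hc three_pos),
      tendsto_natCast_atTop_atTop.eventually_ge_atTop (r / (c / 3)), eventually_ge_atTop 1]
      with n hn hrn hn1
    have hs := abs_le.1 (hn n (by omega))
    have hs' := abs_le.1 (hn (n + 1) (by omega))
    rw [div_le_iff₀ (div_pos hc three_pos)] at hrn
    rw [degSum_succ] at hs'
    push_cast at hs'
    rw [Real.norm_natCast, Real.norm_natCast]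
    linarith

end Growth

section QuadraticExponent

variable {Fq}
variable {b : ℕ → Fq[X]} {ξ : K Fq} {κ : ℕ} {μ M δ : ℝ}

local notation "𝔮" => (Fintype.card Fq : ℝ)

lemma eventually_exists_inv_card_pow_le_kabs_evalK (hξ : IsCFOf Fq ξ (cfA Fq b))
    (hcomp : ∀ᶠ n in atTop, complexity b n ≤ ((κ * n : ℕ) : ℕ∞))
    (hg : HasLinearGrowth b κ μ M) (hδ : dioExp b < δ) :
    ∀ᶠ n : ℕ in atTop, ∀ (h : ℕ) (P : Fq[X][X]), 2 * h < μ * n → P.natDegree ≤ 2 →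
      CoeffNatDegreeLE P h → evalK Fq P ξ ≠ 0 →
      ∃ e : ℕ, (e : ℝ) ≤ 6 * κ * M * δ * n ∧ (𝔮 ^ e)⁻¹ ≤ kabs Fq (evalK Fq P ξ) := by
  filter_upwards [eventually_exists_sameBlock_mismatch hcomp hδ,
    hg.eventually_exists_degSum_between hξ.natDegree_pos,
    hg.eventually_degSum_add_le hξ.natDegree_pos] with n hblock hbetween hle h P hh hdeg hcoeff hP
  obtain ⟨i, j, l, hij, hj, hl, hsame, hmismatch, hjl⟩ := hblock
  obtain ⟨m, hm, hml⟩ := hbetween h i j l hh (hij.le.trans hj) hj hl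
  refine ⟨_, ?_, inv_card_pow_le_kabs_evalK hξ hsame hmismatch hdeg hcoeff hP hm hml⟩
  exact_mod_cast hle i j l δ hij hj hl hjl

lemma HasLinearGrowth.wExp_two_le (hg : HasLinearGrowth b κ μ M) (hξ : IsCFOf Fq ξ (cfA Fq b))
    (hcomp : ∀ᶠ n in atTop, complexity b n ≤ ((κ * n : ℕ) : ℕ∞)) (hδ : dioExp b < δ) :
    wExp Fq 2 ξ ≤ ((18 * κ * (M / μ) * δ : ℝ) : EReal) := by
  have hM : 0 ≤ M := zero_le_one.trans (hg.one_le hξ.natDegree_pos)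
  have hδ₀ : 0 ≤ δ := zero_le_one.trans (EReal.coe_le_coe_iff.1 ((one_le_dioExp b).trans hδ.le))
  have hμ := hg.pos
  refine wExp_le_of_eventually ?_
  filter_upwards [eventually_exists_two_mul_lt_le_three_mul
    (eventually_exists_inv_card_pow_le_kabs_evalK hξ hcomp hg hδ) hμ]
    with h ⟨n, hn, hlt, hle⟩ P hdeg hcoeff hP
  obtain ⟨e, he, hPe⟩ := hn h P hlt hdeg hcoeff hP
  refine ⟨e, ?_, hPe⟩
  calc (e : ℝ) ≤ 6 * κ * M * δ * n := he
    _ = 6 * κ * (M / μ) * δ * (μ * n) := by field_simp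
    _ ≤ 6 * κ * (M / μ) * δ * (3 * h) := by gcongr
    _ = 18 * κ * (M / μ) * δ * h := by ring

lemma wExp_two_le_of_kabs_le (hξ : IsCFOf Fq ξ (cfA Fq b))
    (hcomp : ∀ᶠ n in atTop, complexity b n ≤ ((κ * n : ℕ) : ℕ∞)) {A : ℝ}
    (hA : ∀ n, kabs Fq (polyToK Fq (b n)) ≤ A) :
    wExp Fq 2 ξ ≤ ((18 * κ * (Real.log A / Real.log 𝔮) : ℝ) : EReal) * dioExp b := by
  have hκ : (0 : ℝ) < κ := Nat.cast_pos.2 (pos_of_complexity_le hcomp)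
  have hg : HasLinearGrowth b κ 1 (Real.log A / Real.log 𝔮) :=
    hasLinearGrowth_of_natDegree_le hξ.natDegree_pos fun n =>
      natDegree_le_log_div_log (ne_zero_of_natDegree_gt (hξ.natDegree_pos n)) (hA n)
  have hM := hg.one_le hξ.natDegree_pos
  exact le_coe_mul_of_forall_lt_coe (by positivity) fun δ hδ => by
    simpa only [div_one] using hg.wExp_two_le hξ hcomp hδ

lemma exists_isLittleO_degSum_sub_mul (hξ : IsCFOf Fq ξ (cfA Fq b)) {l : ℝ}
    (hl : Tendsto (fun n : ℕ => kabs Fq (polyToK Fq (qden Fq b n)) ^ ((n : ℝ)⁻¹)) atTop (nhds l)) :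
    ∃ r : ℝ, 0 < r ∧ (fun n => (degSum b n : ℝ) - r * n) =o[atTop] (Nat.cast : ℕ → ℝ) := by
  have hpow (n : ℕ) : kabs Fq (polyToK Fq (qden Fq b n)) ^ ((n : ℝ)⁻¹) =
      𝔮 ^ ((degSum b n : ℝ) / n) := by
    rw [qden, kabs_qSeq_succ hξ, ← Real.rpow_natCast_mul card_pos.le, div_eq_mul_inv]
  have hone : ∀ᶠ n : ℕ in atTop, 1 ≤ (degSum b n : ℝ) / n := by
    filter_upwards [eventually_gt_atTop 0] with n hn
    rw [one_le_div (Nat.cast_pos.2 hn)]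
    exact_mod_cast le_degSum hξ.natDegree_pos n
  have hql : 𝔮 ≤ l := ge_of_tendsto hl <| by
    filter_upwards [hone] with n hn
    rw [hpow]
    exact Real.self_le_rpow_of_one_le one_lt_card.le hn
  have hl₀ : l ≠ 0 := (card_pos.trans_le hql).ne'
  have hratio : Tendsto (fun n : ℕ => (degSum b n : ℝ) / n) atTop (nhds (Real.logb 𝔮 l)) := by
    refine ((hl.log hl₀).div_const (Real.log 𝔮)).congr fun n => ?_
    rw [hpow, Real.log_rpow card_pos, mul_div_cancel_right₀ _ (Real.log_pos one_lt_card).ne']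
  refine ⟨Real.logb 𝔮 l, one_pos.trans_le (ge_of_tendsto hratio hone), ?_⟩
  refine (Asymptotics.isLittleO_iff_tendsto' ?_).2 ?_
  · filter_upwards [eventually_ne_atTop 0] with n hn h
    exact absurd (Nat.cast_eq_zero.1 h) hn
  · refine Tendsto.congr' ?_ (sub_self (Real.logb 𝔮 l) ▸ hratio.sub_const (Real.logb 𝔮 l))
    filter_upwards [eventually_ne_atTop 0] with n hn
    field_simp

lemma wExp_two_le_of_tendsto (hξ : IsCFOf Fq ξ (cfA Fq b))
    (hcomp : ∀ᶠ n in atTop, complexity b n ≤ ((κ * n : ℕ) : ℕ∞)) {l : ℝ}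
    (hl : Tendsto (fun n : ℕ => kabs Fq (polyToK Fq (qden Fq b n)) ^ ((n : ℝ)⁻¹)) atTop (nhds l)) :
    wExp Fq 2 ξ ≤ ((18 * κ : ℝ) : EReal) * dioExp b := by
  have hκ : (0 : ℝ) < κ := Nat.cast_pos.2 (pos_of_complexity_le hcomp)
  obtain ⟨r, hr, hlittle⟩ := exists_isLittleO_degSum_sub_mul hξ hl
  refine le_coe_mul_of_forall_lt_coe (by positivity) fun δ hδ => ?_
  have hbound : ∀ᶠ ε in nhdsWithin (0 : ℝ) (Set.Ioi 0),
      wExp Fq 2 ξ ≤ ((18 * κ * ((r + ε) / (r - ε)) * δ : ℝ) : EReal) := by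
    filter_upwards [Ioo_mem_nhdsGT hr] with ε hε
    exact (hasLinearGrowth_of_isLittleO hlittle hε.1 hε.2).wExp_two_le hξ hcomp hδ
  have hcont : ContinuousAt (fun ε : ℝ => 18 * κ * ((r + ε) / (r - ε)) * δ) 0 := by
    fun_prop (disch := simpa using hr.ne')
  have hlim := (continuous_coe_real_ereal.continuousAt.comp hcont).tendsto.mono_left
    (nhdsWithin_le_nhds (s := Set.Ioi 0))
  simpa [hr.ne'] using ge_of_tendsto hlim hbound

end QuadraticExponent

theorem stmt3_general (Fq : Type) [Field Fq] [Fintype Fq] (κ : ℕ) (b : ℕ → Polynomial Fq)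
    (hcomp : ∀ᶠ n in atTop, complexity b n ≤ ((κ * n : ℕ) : ℕ∞))
    (ξ : K Fq) (hξ : IsCFOf Fq ξ (cfA Fq b)) :
    (∀ A : ℝ, (∀ n, kabs Fq (polyToK Fq (b n)) ≤ A) →
      wExp Fq 2 ξ ≤
        ((18 * κ * (Real.log A / Real.log (Fintype.card Fq)) : ℝ) : EReal) * dioExp b) ∧
    ((∃ l : ℝ, Tendsto (fun n : ℕ => kabs Fq (polyToK Fq (qden Fq b n)) ^ ((n : ℝ)⁻¹))
        atTop (nhds l)) →
      wExp Fq 2 ξ ≤ ((18 * κ : ℝ) : EReal) * dioExp b) :=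
  ⟨fun _ hA => wExp_two_le_of_kabs_le hξ hcomp hA,
    fun ⟨_, hl⟩ => wExp_two_le_of_tendsto hξ hcomp hl⟩

theorem stmt3 (Fq : Type) [Field Fq] [Fintype Fq]
    (κ A : ℕ) (hκ : 2 ≤ κ) (hA : Fintype.card Fq ≤ A)
    (b : ℕ → Polynomial Fq)
    (hb : ∀ n : ℕ, (Fintype.card Fq : ℝ) ≤ kabs Fq (polyToK Fq (b n)) ∧
      kabs Fq (polyToK Fq (b n)) ≤ (A : ℝ))
    (n₀ : ℕ) (hn₀ : 1 ≤ n₀)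
    (hcomp : ∀ n : ℕ, n₀ ≤ n → complexity b n ≤ ((κ * n : ℕ) : ℕ∞))
    (hdio : dioExp b ≠ ⊤)
    (ξ : K Fq) (hξ : IsCFOf Fq ξ (cfA Fq b)) :
    wExp Fq 2 ξ ≤
      ((128 * (2 * κ + 1) ^ 3 *
        (Real.log A / Real.log (Fintype.card Fq)) ^ 4 : ℝ) : EReal) * dioExp b ∧
    ((∃ l : ℝ, Filter.Tendsto
        (fun n : ℕ => kabs Fq (polyToK Fq (qden Fq b n)) ^ ((n : ℝ)⁻¹))
        Filter.atTop (nhds l)) →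
      wExp Fq 2 ξ ≤ ((64 * (2 * κ + 1) ^ 3 : ℝ) : EReal) * dioExp b) := by
  obtain ⟨hbounded, hlimit⟩ := stmt3_general Fq κ b (eventually_atTop.2 ⟨n₀, hcomp⟩) ξ hξ
  have hdio₀ : 0 ≤ dioExp b := zero_le_one.trans (one_le_dioExp b)
  have hconst : (18 * κ : ℝ) ≤ 64 * (2 * κ + 1) ^ 3 := by
    nlinarith [pow_nonneg (κ.cast_nonneg (α := ℝ)) 3, sq_nonneg (κ : ℝ)]
  have hlog : 1 ≤ Real.log A / Real.log (Fintype.card Fq) := by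
    rw [one_le_div (Real.log_pos one_lt_card)]
    exact Real.log_le_log card_pos (Nat.cast_le.2 hA)
  refine ⟨(hbounded A fun n => (hb n).2).trans ?_, fun hl => (hlimit hl).trans ?_⟩ <;>
    refine mul_le_mul_of_nonneg_right (EReal.coe_le_coe ?_) hdio₀
  · exact mul_le_mul (by linarith) (le_self_pow₀ hlog four_ne_zero) (by positivity) (by positivity)
  · exact hconst

end Ooto
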